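/- arXiv:1609.00453 — 3 statements merged into one kernel-verified Lean document; each statement's English description precedes it below -/
import Mathlib

section
/- There exists a 2-factorization of K_48 minus a perfect matching into exactly 17 C_3-factors and 6 C_4-factors. That is, (17,6) ∈ HWP(48; 3, 4). -/
open SimpleGraph

/-- A `C_k`-factor: a spanning 2-regular subgraph all of whose connected
components (necessarily cycles) have exactly `k` vertices. -/
def IsCycleFactor {V : Type*} (H : SimpleGraph V) (k : ℕ) : Prop :=
  (∀ v : V, (H.neighborSet v).ncard = 2) ∧
  (∀ v : V, (H.connectedComponentMk v).supp.ncard = k)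

/-- A 1-factor (perfect matching): every vertex has exactly one neighbour. -/
def IsOneFactor {V : Type*} (H : SimpleGraph V) : Prop :=
  ∀ v : V, (H.neighborSet v).ncard = 1

/-- `F 0, …, F (N-1)` partitions the edge set of `G`. -/
def IsDecompOn {V : Type*} (G : SimpleGraph V) (F : ℕ → SimpleGraph V) (N : ℕ) : Prop :=
  (∀ i < N, F i ≤ G) ∧
  (∀ i < N, ∀ j < N, i ≠ j → Disjoint (F i).edgeSet (F j).edgeSet) ∧
  G.edgeSet = ⋃ i ∈ Set.Iio N, (F i).edgeSet

/-- A Hamilton–Waterloo decomposition of a graph `G` into `α` `C_m`-factors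
and `β` `C_n`-factors. -/
def IsHWGraph {V : Type*} (G : SimpleGraph V) (m n α β : ℕ) : Prop :=
  ∃ F : ℕ → SimpleGraph V, IsDecompOn G F (α + β) ∧
    (∀ i < α, IsCycleFactor (F i) m) ∧
    (∀ i, α ≤ i → i < α + β → IsCycleFactor (F i) n)

/-- `HW v m n α β`: a partition of `E(K_v)` (for `v` odd) or of `E(K_v)` minus a
perfect matching (for `v` even) into `α` `C_m`-factors and `β` `C_n`-factors. -/
def HW (v m n α β : ℕ) : Prop :=
  ∃ I : SimpleGraph (Fin v),
    (Odd v → I = ⊥) ∧ (Even v → IsOneFactor I) ∧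
    IsHWGraph ((⊤ : SimpleGraph (Fin v)) \ I) m n α β

/-- The complete `u`-partite graph with parts of size `g`. -/
def Kpartite (u g : ℕ) : SimpleGraph (Fin u × Fin g) :=
  SimpleGraph.fromRel (fun a b => a.1 ≠ b.1)

/-- The Cayley graph on an additive group with connection set `S`. -/
def cayley (Γ : Type*) [AddGroup Γ] (S : Set Γ) : SimpleGraph Γ :=
  SimpleGraph.fromRel (fun a b => a - b ∈ S)

/-!
The 48 vertices form three layers, each a copy of `ℤ₄[ω]` with `ω ^ 2 + ω + 1 = 0`. For each `u`
the affine map `x ↦ ω * x + u`, followed from layer to layer, returns to its start after three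
steps, and these 16 maps give `C_3`-factors that use every edge between different layers once.
Inside the layers the differences other than `0` and `2` split into seven pairs, each giving a
`C_4`-factor.

One `C_4`-factor, with difference `± 1`, is then traded together with three of the `C_3`-factors
for four new `C_3`-factors. Each new factor consists of closed paths of length 3, and at every
vertex the four new factors leave along four different old ones. The choice is governed by an
affine function with values in the field `ℤ₂[ω]` of order 4: the paths run through the old
factors of index `0, 1, ω` cyclically, or stay in the old factor of index `ω ^ 2`.
-/

/-- The functional graph of `f`, with orientation and loops forgotten. -/
def successorGraph {V : Type*} (f : V → V) : SimpleGraph V :=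
  SimpleGraph.fromRel fun v w => f v = w

/-- The graphs `F i` partition the edge set of `G`, for an arbitrary index type (compare
`IsDecompOn`). -/
structure IsEdgePartition {V κ : Type*} (G : SimpleGraph V) (F : κ → SimpleGraph V) : Prop where
  disjoint : ∀ ⦃i j⦄, i ≠ j → Disjoint (F i) (F j)
  iSup_eq : ⨆ i, F i = G

section CycleFactors

variable {V : Type*} {H : SimpleGraph V}

theorem supp_connectedComponentMk_eq {v : V} {T : Set V} (hv : v ∈ T)
    (hclosed : ∀ a ∈ T, ∀ b, H.Adj a b → b ∈ T) (hreach : ∀ a ∈ T, H.Reachable v a) :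
    (H.connectedComponentMk v).supp = T := by
  ext a
  rw [ConnectedComponent.mem_supp_iff, ConnectedComponent.eq]
  refine ⟨fun h => ?_, fun ha => (hreach a ha).symm⟩
  have hva := (reachable_iff_reflTransGen v a).1 h.symm
  induction hva with
  | refl => exact hv
  | tail hvb hbc ih => exact hclosed _ (ih ((reachable_iff_reflTransGen v _).2 hvb).symm) _ hbc

theorem successorGraph_adj {f : V → V} (hf : ∀ v, f v ≠ v) {v w : V} :
    (successorGraph f).Adj v w ↔ f v = w ∨ f w = v := by
  rw [successorGraph, fromRel_adj, and_iff_right_iff_imp]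
  rintro (rfl | rfl)
  exacts [(hf v).symm, hf w]

section ConstantPeriod

variable {f : V → V} {k : ℕ}

theorem neighborSet_successorGraph (hk : 2 ≤ k) (hf : ∀ v, f.minimalPeriod v = k) (v : V) :
    (successorGraph f).neighborSet v = {f v, f^[k - 1] v} := by
  have hne (v : V) : f v ≠ v := fun h => by
    have := (hf v).symm.trans (Function.minimalPeriod_eq_one_iff_isFixedPt.2 h)
    lia
  have hreturn (v : V) : f^[k - 1 + 1] v = v := by
    rw [Nat.sub_add_cancel (by lia), ← hf v, Function.iterate_minimalPeriod]
  ext w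
  rw [mem_neighborSet, successorGraph_adj hne, Set.mem_insert_iff, Set.mem_singleton_iff, eq_comm]
  refine or_congr_right ⟨?_, ?_⟩
  · rintro rfl
    exact (hreturn w).symm
  · rintro rfl
    rw [← Function.iterate_succ_apply' f, hreturn]

theorem supp_connectedComponentMk_successorGraph (hk : 2 ≤ k) (hf : ∀ v, f.minimalPeriod v = k)
    (v : V) : ((successorGraph f).connectedComponentMk v).supp = (f^[·] v) '' Set.Iio k := by
  have hrange : (f^[·] v) '' Set.Iio k = Set.range (f^[·] v) := by
    refine (Set.image_subset_range _ _).antisymm (Set.range_subset_iff.2 fun i => ?_)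
    exact ⟨i % k, Nat.mod_lt _ (by lia), hf v ▸ Function.iterate_mod_minimalPeriod_eq⟩
  rw [hrange]
  refine supp_connectedComponentMk_eq ⟨0, rfl⟩ ?_ ?_
  · rintro _ ⟨i, rfl⟩ b hb
    rw [← mem_neighborSet, neighborSet_successorGraph hk hf] at hb
    rcases hb with rfl | rfl
    · exact ⟨i + 1, Function.iterate_succ_apply' f i v⟩
    · exact ⟨k - 1 + i, Function.iterate_add_apply f _ i v⟩
  · rintro _ ⟨i, rfl⟩
    induction i with
    | zero => exact Reachable.refl v
    | succ i ih =>
      refine ih.trans (Adj.reachable ?_)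
      rw [← mem_neighborSet, neighborSet_successorGraph hk hf]
      exact .inl (Function.iterate_succ_apply' f i v)

theorem isCycleFactor_successorGraph (hk : 3 ≤ k) (hf : ∀ v, f.minimalPeriod v = k) :
    IsCycleFactor (successorGraph f) k := by
  have hinj (v : V) : Set.InjOn (f^[·] v) (Set.Iio k) :=
    hf v ▸ Function.iterate_injOn_Iio_minimalPeriod
  refine ⟨fun v => ?_, fun v => ?_⟩
  · rw [neighborSet_successorGraph (by lia) hf, Set.ncard_pair]
    intro h
    have := hinj v (show 1 < k by lia) (show k - 1 < k by lia) h
    lia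
  · rw [supp_connectedComponentMk_successorGraph (by lia) hf, (hinj v).ncard_image,
      Set.ncard_Iio_nat]

theorem isCycleFactor_three_of_iterate (hne : ∀ v, f v ≠ v) (hf : ∀ v, f (f (f v)) = v) :
    IsCycleFactor (successorGraph f) 3 :=
  isCycleFactor_successorGraph le_rfl fun v =>
    Function.minimalPeriod_eq_prime (show f^[3] v = v from hf v) (hne v)

end ConstantPeriod

theorem isCycleFactor_four_of_twin (hdeg : ∀ v, (H.neighborSet v).ncard = 2) {twin : V → V}
    (twin_ne : ∀ v, twin v ≠ v) (htwin : ∀ v, H.neighborSet (twin v) = H.neighborSet v) :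
    IsCycleFactor H 4 := by
  refine ⟨hdeg, fun v => ?_⟩
  have hpair : ({v, twin v} : Set V).ncard = 2 := Set.ncard_pair (twin_ne v).symm
  have hadj_twin {a : V} (ha : H.Adj v a) : H.Adj (twin v) a := by
    rwa [← mem_neighborSet, htwin, mem_neighborSet]
  have hnbr {a : V} (ha : H.Adj v a) : H.neighborSet a = {v, twin v} := by
    refine (Set.eq_of_subset_of_ncard_le ?_ ?_ (Set.finite_of_ncard_ne_zero ?_)).symm
    · rintro b (rfl | rfl)
      exacts [ha.symm, (hadj_twin ha).symm]
    all_goals simp [hdeg, hpair]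
  have hdisj : Disjoint {v, twin v} (H.neighborSet v) := by
    rw [Set.disjoint_left]
    rintro b (rfl | rfl) hb
    · exact H.irrefl hb
    · exact H.irrefl (hadj_twin hb)
  have hsupp : (H.connectedComponentMk v).supp = {v, twin v} ∪ H.neighborSet v := by
    refine supp_connectedComponentMk_eq (.inl (.inl rfl)) ?_ ?_
    · rintro a ((rfl | rfl) | ha) b hb
      · exact .inr hb
      · exact .inr (htwin v ▸ hb)
      · exact .inl (hnbr ha ▸ hb)
    · obtain ⟨p, hp⟩ := Set.nonempty_of_ncard_ne_zero (hdeg v ▸ two_ne_zero)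
      rintro a ((rfl | rfl) | ha)
      exacts [Reachable.refl _, (Adj.reachable hp).trans (hadj_twin hp).symm.reachable,
        Adj.reachable ha]
  rw [hsupp, Set.ncard_union_eq hdisj (Set.toFinite _)
    (Set.finite_of_ncard_ne_zero (hdeg v ▸ two_ne_zero)), hpair, hdeg]

end CycleFactors

section Transport

variable {V W : Type*} {H : SimpleGraph W}

theorem ncard_neighborSet_comap (e : V ≃ W) (v : V) :
    ((H.comap e).neighborSet v).ncard = (H.neighborSet (e v)).ncard :=
  Nat.card_congr ((Iso.comap e H).mapNeighborSet v)

theorem IsOneFactor.comap (hH : IsOneFactor H) (e : V ≃ W) : IsOneFactor (H.comap e) :=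
  fun v => (ncard_neighborSet_comap e v).trans (hH _)

theorem IsCycleFactor.comap {k : ℕ} (hH : IsCycleFactor H k) (e : V ≃ W) :
    IsCycleFactor (H.comap e) k :=
  ⟨fun v => (ncard_neighborSet_comap e v).trans (hH.1 _), fun v =>
    (Nat.card_congr (ConnectedComponent.isoEquivSupp (Iso.comap e H) _)).trans (hH.2 (e v))⟩

end Transport

theorem exists_finEquiv_iff_lt {κ : Type*} [Fintype κ] (p : κ → Prop) [DecidablePred p] :
    ∃ e : Fin (Fintype.card {i // p i} + Fintype.card {i // ¬p i}) ≃ κ,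
      ∀ i, p (e i) ↔ i < Fintype.card {i // p i} := by
  refine ⟨finSumFinEquiv.symm.trans <|
    ((Fintype.equivFin _).symm.sumCongr (Fintype.equivFin _).symm).trans (Equiv.sumCompl p),
    Fin.addCases (fun i => ?_) fun i => ?_⟩
  · simpa using ((Fintype.equivFin {i // p i}).symm i).2
  · simpa using ((Fintype.equivFin {i // ¬p i}).symm i).2

namespace IsEdgePartition

variable {V κ ι : Type*} {G G' : SimpleGraph V} {F : κ → SimpleGraph V} {F' : ι → SimpleGraph V}

theorem le (hF : IsEdgePartition G F) (i : κ) : F i ≤ G :=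
  hF.iSup_eq ▸ le_iSup F i

theorem sumElim (hF : IsEdgePartition G F) (hF' : IsEdgePartition G' F') (hG : Disjoint G G') :
    IsEdgePartition (G ⊔ G') (Sum.elim F F') where
  disjoint := by
    rintro (i | i) (j | j) hij
    · exact hF.disjoint (ne_of_apply_ne _ hij)
    · exact hG.mono (hF.le i) (hF'.le j)
    · exact hG.symm.mono (hF'.le i) (hF.le j)
    · exact hF'.disjoint (ne_of_apply_ne _ hij)
  iSup_eq := by simp only [iSup_sum, Sum.elim_inl, Sum.elim_inr, hF.iSup_eq, hF'.iSup_eq]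

theorem exchange {J : Type*} (hF : IsEdgePartition G F) (e : J ↪ κ)
    (hF' : IsEdgePartition (⨆ j, F (e j)) F') :
    IsEdgePartition G (Sum.elim F' fun i : {i // i ∉ Set.range e} => F i) := by
  have hrest : IsEdgePartition (⨆ i : {i // i ∉ Set.range e}, F i)
      fun i : {i // i ∉ Set.range e} => F i :=
    ⟨fun i j hij => hF.disjoint (Subtype.coe_injective.ne hij), rfl⟩
  have hdisj : Disjoint (⨆ j, F (e j)) (⨆ i : {i // i ∉ Set.range e}, F i) := by
    simp only [disjoint_iSup_iff, iSup_disjoint_iff]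
    exact fun i j => hF.disjoint fun h => i.2 ⟨j, h⟩
  have hsup : (⨆ j, F (e j)) ⊔ (⨆ i : {i // i ∉ Set.range e}, F i) = G := by
    rw [← hF.iSup_eq, ← iSup_range (g := F) (f := e), iSup_subtype]
    exact (iSup_split F (· ∈ Set.range e)).symm
  exact hsup ▸ hF'.sumElim hrest hdisj

theorem comap {W : Type*} (hF : IsEdgePartition G F) (e : W → V) :
    IsEdgePartition (G.comap e) fun i => (F i).comap e where
  disjoint i j hij := by
    have h := hF.disjoint hij
    rw [disjoint_left] at h ⊢
    exact fun v w => h (e v) (e w)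
  iSup_eq := by
    ext v w
    simp only [← hF.iSup_eq, iSup_adj, comap_adj]

theorem isDecompOn {N : ℕ} (hF : IsEdgePartition G F) (e : Fin N ≃ κ) :
    IsDecompOn G (fun i => if h : i < N then F (e ⟨i, h⟩) else ⊥) N := by
  refine ⟨fun i hi => ?_, fun i hi j hj hij => ?_, ?_⟩
  · simpa only [hi, dite_true] using hF.le _
  · simp only [hi, hj, dite_true, disjoint_edgeSet]
    exact hF.disjoint (e.injective.ne (by simpa only [ne_eq, Fin.mk.injEq] using hij))
  · ext x
    simp only [← hF.iSup_eq, edgeSet_iSup, Set.mem_iUnion, Set.mem_Iio]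
    constructor
    · rintro ⟨c, hc⟩
      exact ⟨e.symm c, (e.symm c).2, by simpa using hc⟩
    · rintro ⟨i, hi, hx⟩
      exact ⟨e ⟨i, hi⟩, by simpa only [hi, dite_true] using hx⟩

theorem hw_card [Fintype V] [Fintype κ] {I : SimpleGraph V} (hV : Even (Fintype.card V))
    (hI : IsOneFactor I) (hF : IsEdgePartition (⊤ \ I) F) (p : κ → Prop) [DecidablePred p]
    {m n : ℕ} (hm : ∀ i, p i → IsCycleFactor (F i) m)
    (hn : ∀ i, ¬p i → IsCycleFactor (F i) n) :
    HW (Fintype.card V) m n (Fintype.card {i // p i}) (Fintype.card {i // ¬p i}) := by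
  let e : Fin (Fintype.card V) ≃ V := (Fintype.equivFin V).symm
  have hcomap : (⊤ \ I).comap e = ⊤ \ I.comap e := by
    ext v w
    simp only [comap_adj, sdiff_adj, top_adj, ne_eq, e.injective.eq_iff]
  obtain ⟨toIndex, hp⟩ := exists_finEquiv_iff_lt p
  refine ⟨I.comap e, fun hodd => absurd hV (Nat.not_even_iff_odd.2 hodd),
    fun _ => hI.comap e, _, (hcomap ▸ hF.comap e).isDecompOn toIndex, fun i hi => ?_,
    fun i hi hi' => ?_⟩
  · have hlt := Nat.lt_add_right (Fintype.card {i // ¬p i}) hi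
    simpa only [hlt, dite_true] using (hm _ ((hp ⟨i, hlt⟩).2 hi)).comap e
  · simpa only [hi', dite_true] using (hn _ ((hp ⟨i, hi'⟩).not.2 hi.not_gt)).comap e

end IsEdgePartition

section Cayley

variable {Γ : Type*} [AddGroup Γ] {S : Set Γ}

theorem cayley_adj (hneg : ∀ x ∈ S, -x ∈ S) {v w : Γ} :
    (cayley Γ S).Adj v w ↔ v ≠ w ∧ v - w ∈ S := by
  rw [cayley, fromRel_adj, and_congr_right_iff, or_iff_left_iff_imp]
  exact fun _ h => neg_sub w v ▸ hneg _ h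

theorem neighborSet_cayley (hneg : ∀ x ∈ S, -x ∈ S) (hzero : 0 ∉ S) (v : Γ) :
    (cayley Γ S).neighborSet v = (fun x => x + v) '' S := by
  ext w
  rw [mem_neighborSet, cayley_adj hneg, Set.mem_image]
  constructor
  · rintro ⟨-, h⟩
    exact ⟨w - v, neg_sub v w ▸ hneg _ h, sub_add_cancel w v⟩
  · rintro ⟨x, hx, rfl⟩
    refine ⟨fun h => hzero ?_, ?_⟩
    · rwa [right_eq_add.1 h] at hx
    · rw [sub_add_eq_sub_sub_swap, sub_self, zero_sub]
      exact hneg x hx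

theorem ncard_neighborSet_cayley (hneg : ∀ x ∈ S, -x ∈ S) (hzero : 0 ∉ S) (v : Γ) :
    ((cayley Γ S).neighborSet v).ncard = S.ncard := by
  rw [neighborSet_cayley hneg hzero, Set.ncard_image_of_injective _ (add_left_injective v)]

theorem isOneFactor_cayley_singleton {s : Γ} (hs : s ≠ 0) (hneg : -s = s) :
    IsOneFactor (cayley Γ {s}) := fun v => by
  rw [ncard_neighborSet_cayley _ (Set.mem_singleton_iff.not.2 hs.symm), Set.ncard_singleton]
  rintro _ rfl
  exact hneg

theorem isCycleFactor_four_cayley (hneg : ∀ x ∈ S, -x ∈ S) (hzero : 0 ∉ S) (hcard : S.ncard = 2)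
    {h : Γ} (hne : h ≠ 0) (hS : ∀ x, h + x ∈ S ↔ x ∈ S) : IsCycleFactor (cayley Γ S) 4 := by
  refine isCycleFactor_four_of_twin
    (fun v => (ncard_neighborSet_cayley hneg hzero v).trans hcard)
    (twin := fun v => h + v) (fun v => add_eq_right.not.2 hne) fun v => ?_
  ext w
  have hmem {v w : Γ} : (cayley Γ S).Adj v w ↔ v - w ∈ S := by
    rw [cayley_adj hneg, and_iff_right_iff_imp]
    rintro hvw rfl
    exact hzero (sub_self v ▸ hvw)
  rw [mem_neighborSet, mem_neighborSet, hmem, hmem, add_sub_assoc, hS]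

theorem cayley_pair_neg (s : Γ) : cayley Γ {s, -s} = successorGraph (s + ·) := by
  ext v w
  rw [cayley, successorGraph, fromRel_adj, fromRel_adj]
  simp only [Set.mem_insert_iff, Set.mem_singleton_iff, sub_eq_iff_eq_add, eq_neg_add_iff_add_eq]
  grind

theorem isEdgePartition_cayley {κ : Type*} {S : κ → Set Γ} (hneg : ∀ i, ∀ x ∈ S i, -x ∈ S i)
    (hdisj : ∀ ⦃i j⦄, i ≠ j → Disjoint (S i) (S j)) :
    IsEdgePartition (cayley Γ (⋃ i, S i)) fun i => cayley Γ (S i) where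
  disjoint i j hij := by
    simp only [SimpleGraph.disjoint_left, cayley_adj (hneg _)]
    exact fun v w hi hj => Set.disjoint_left.1 (hdisj hij) hi.2 hj.2
  iSup_eq := by
    ext v w
    simp only [iSup_adj, cayley, fromRel_adj, Set.mem_iUnion, exists_and_left, exists_or]

end Cayley

section Successor

variable {V : Type*}

theorem successorGraph_eq_of_leftInverse {f g : V → V} (hfg : Function.LeftInverse f g)
    (hgf : Function.LeftInverse g f) : successorGraph f = successorGraph g := by
  have hswap (v w : V) : f v = w ↔ g w = v :=
    ⟨fun h => h ▸ hgf v, fun h => h ▸ hfg w⟩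
  ext v w
  rw [successorGraph, successorGraph, fromRel_adj, fromRel_adj, hswap, hswap, or_comm]

theorem isEdgePartition_successorGraph_phase {J T : Type*} {f : J → V → V} {φ : T → V → J}
    (hdisj : ∀ ⦃i j⦄, i ≠ j → Disjoint (successorGraph (f i)) (successorGraph (f j)))
    (hasymm : ∀ j v, f j (f j v) ≠ v) (hφ : ∀ v, Function.Bijective fun t => φ t v) :
    IsEdgePartition (⨆ j, successorGraph (f j))
      fun t => successorGraph fun v => f (φ t v) v where
  disjoint t t' ht := by
    have hindex {i j : J} {v w : V} (hvw : v ≠ w) (hi : f i v = w ∨ f i w = v)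
        (hj : f j v = w ∨ f j w = v) : i = j := by
      by_contra hij
      exact SimpleGraph.disjoint_left.1 (hdisj hij) v w ⟨hvw, hi⟩ ⟨hvw, hj⟩
    rw [SimpleGraph.disjoint_left]
    rintro v w ⟨hvw, h | h⟩ ⟨-, h' | h'⟩
    · exact ht ((hφ v).injective (hindex hvw (.inl h) (.inl h')))
    · dsimp only at h h'
      rw [← hindex hvw (.inl h) (.inr h'), ← h] at h'
      exact hasymm _ v h'
    · dsimp only at h h'
      rw [← hindex hvw (.inr h) (.inl h'), ← h] at h'
      exact hasymm _ w h'
    · exact ht ((hφ w).injective (hindex hvw (.inr h) (.inr h')))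
  iSup_eq := by
    ext v w
    simp only [iSup_adj, successorGraph, fromRel_adj, exists_and_left, exists_or]
    rw [(hφ v).surjective.exists (p := fun j => f j v = w),
      (hφ w).surjective.exists (p := fun j => f j w = v)]

end Successor

section Spiral

variable {R : Type*} [CommRing R] {ω : R}

/-- The step from `(l, x)` to `(l + 1, ω * x + u)`, which climbs one layer in the three-layer vertex
set `ZMod 3 × R`. -/
def spiral (ω u : R) (v : ZMod 3 × R) : ZMod 3 × R :=
  (v.1 + 1, ω * v.2 + u)

theorem spiral_ne (u : R) (v : ZMod 3 × R) : spiral ω u v ≠ v :=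
  fun h => absurd (congrArg Prod.fst h) (add_eq_left.not.2 (by decide))

theorem spiral_spiral_ne (u u' : R) (v : ZMod 3 × R) : spiral ω u (spiral ω u' v) ≠ v := by
  refine fun h => absurd (congrArg Prod.fst h) ?_
  simp only [spiral, add_assoc]
  exact add_eq_left.not.2 (by decide)

theorem spiral_spiral_spiral (hω : ω ^ 2 + ω + 1 = 0) (u : R) (v : ZMod 3 × R) :
    spiral ω u (spiral ω u (spiral ω u v)) = v := by
  refine Prod.ext ?_ ?_
  · simp only [spiral, add_assoc]
    exact add_eq_left.2 (by decide)
  · simp only [spiral]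
    linear_combination ((ω - 1) * v.2 + u) * hω

theorem isEdgePartition_spiral (ω : R) :
    IsEdgePartition ((⊤ : SimpleGraph (ZMod 3)).comap Prod.fst)
      fun u => successorGraph (spiral ω u) where
  disjoint u u' hu := by
    rw [SimpleGraph.disjoint_left]
    rintro v w ⟨-, h | h⟩ ⟨-, h' | h'⟩
    · exact hu (add_left_cancel (congrArg Prod.snd (h.trans h'.symm)))
    · exact spiral_spiral_ne u' u v (h ▸ h')
    · exact spiral_spiral_ne u' u w (h ▸ h')
    · exact hu (add_left_cancel (congrArg Prod.snd (h.trans h'.symm)))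
  iSup_eq := by
    have hspiral (v w : ZMod 3 × R) : (∃ u, spiral ω u v = w) ↔ v.1 + 1 = w.1 :=
      ⟨fun ⟨_, h⟩ => congrArg Prod.fst h, fun h =>
        ⟨w.2 - ω * v.2, Prod.ext h (add_sub_cancel _ _)⟩⟩
    have hlayers (l l' : ZMod 3) : l ≠ l' ↔ l + 1 = l' ∨ l' + 1 = l := by
      decide +revert
    ext v w
    simp only [iSup_adj, successorGraph, fromRel_adj, exists_and_left, exists_or, hspiral,
      comap_adj, top_adj, ← hlayers, and_iff_right_iff_imp]
    exact ne_of_apply_ne _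

end Spiral

section Construction

open scoped QuadraticAlgebra

/-- The ring `ℤ[ω] / (n)` of Eisenstein integers modulo `n`, where `ω ^ 2 + ω + 1 = 0`. -/
abbrev Eis (n : ℕ) : Type := QuadraticAlgebra (ZMod n) (-1) (-1)

instance (n : ℕ) [NeZero n] : Fintype (Eis n) :=
  Fintype.ofEquiv _ (QuadraticAlgebra.equivProd _ _).symm

theorem Eis.omega_sq_add_omega_add_one (n : ℕ) : (ω : Eis n) ^ 2 + ω + 1 = 0 := by
  ext <;> simp [sq]

theorem Eis.omega_pow_three (n : ℕ) : (ω : Eis n) ^ 3 = 1 := by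
  linear_combination (ω - 1) * omega_sq_add_omega_add_one n

theorem Eis.omega_pow_val_add_one (n : ℕ) (l : ZMod 3) :
    (ω : Eis n) ^ (l + 1).val = ω * ω ^ l.val := by
  rw [ZMod.val_add, ← pow_succ', ← pow_eq_pow_mod _ (omega_pow_three n)]
  rfl

/-- Reduction modulo `2` of the Eisenstein integers modulo `4`. -/
def Eis.red : Eis 4 →+* Eis 2 where
  toFun x := ⟨x.re.cast, x.im.cast⟩
  map_zero' := by decide
  map_one' := by decide
  map_add' := by decide
  map_mul' := by decide

/-- The 48 vertices: three layers, each a copy of the 16-element ring `Eis 4`. -/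
abbrev Vertex : Type := ZMod 3 × Eis 4

theorem spiral_omega_iterate_three (u : Eis 4) (v : Vertex) :
    spiral ω u (spiral ω u (spiral ω u v)) = v :=
  spiral_spiral_spiral (Eis.omega_sq_add_omega_add_one 4) u v

/-- The seven pairs of differences whose Cayley graphs are the `C_4`-factors inside the layers. They
exhaust the nonzero differences within a layer except `2`, and each pair is chosen invariant under a
translation of order `2`. -/
def layerPairs (i : Fin 7) : Finset Vertex :=
  {0} ×ˢ ![{1, -1}, {ω, -ω}, {1 + ω, -(1 + ω)}, {2 + ω, -(2 + ω)}, {3 + ω, -(3 + ω)},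
    {1 + 2 * ω, -(1 + 2 * ω)}, {2 * ω, 2 * ω + 2}] i

theorem neg_mem_layerPairs : ∀ i, ∀ x ∈ layerPairs i, -x ∈ layerPairs i := by decide

theorem card_layerPairs : ∀ i, (layerPairs i).card = 2 := by decide

theorem disjoint_layerPairs : ∀ ⦃i j⦄, i ≠ j → Disjoint (layerPairs i) (layerPairs j) := by
  decide

theorem exists_mem_layerPairs :
    ∀ x, (∃ i, x ∈ layerPairs i) ↔ x.1 = 0 ∧ x ≠ 0 ∧ x ≠ (0, 2) := by decide

theorem exists_add_mem_layerPairs :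
    ∀ i, ∃ h ≠ 0, ∀ x, h + x ∈ layerPairs i ↔ x ∈ layerPairs i := by decide

theorem isCycleFactor_layerPairs (i : Fin 7) : IsCycleFactor (cayley Vertex (layerPairs i)) 4 := by
  obtain ⟨h, hne, hinv⟩ := exists_add_mem_layerPairs i
  have hzero : 0 ∉ layerPairs i := fun h => ((exists_mem_layerPairs 0).1 ⟨i, h⟩).2.1 rfl
  exact isCycleFactor_four_cayley (neg_mem_layerPairs i) hzero
    ((Set.ncard_coe_finset _).trans (card_layerPairs i)) hne hinv

theorem isEdgePartition_layerPairs :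
    IsEdgePartition (cayley Vertex (⋃ i, layerPairs i)) fun i => cayley Vertex (layerPairs i) :=
  isEdgePartition_cayley neg_mem_layerPairs fun _ _ hij =>
    Finset.disjoint_coe.2 (disjoint_layerPairs hij)

theorem isOneFactor_cayley_two : IsOneFactor (cayley Vertex {(0, 2)}) :=
  isOneFactor_cayley_singleton (by decide) (by decide)

theorem cayley_layerPairs_adj {v w : Vertex} :
    (cayley Vertex (⋃ i, layerPairs i)).Adj v w ↔ v.1 = w.1 ∧ v ≠ w ∧ v - w ≠ (0, 2) := by
  rw [cayley_adj]
  · simp only [Set.mem_iUnion, Finset.mem_coe, exists_mem_layerPairs, Prod.fst_sub, sub_eq_zero,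
      ne_eq]
    tauto
  · simp only [Set.mem_iUnion, Finset.mem_coe]
    exact fun x ⟨i, hx⟩ => ⟨i, neg_mem_layerPairs i x hx⟩

/-- The factors of a Hamilton–Waterloo decomposition of `K_48` into 16 `C_3`-factors and 7
`C_4`-factors. -/
def coarseFactor : Eis 4 ⊕ Fin 7 → SimpleGraph Vertex :=
  Sum.elim (fun u => successorGraph (spiral ω u)) fun i => cayley Vertex (layerPairs i)

theorem isEdgePartition_coarseFactor :
    IsEdgePartition (⊤ \ cayley Vertex {(0, 2)}) coarseFactor := by
  have hdisj : Disjoint ((⊤ : SimpleGraph (ZMod 3)).comap Prod.fst)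
      (cayley Vertex (⋃ i, layerPairs i)) := by
    rw [SimpleGraph.disjoint_left]
    exact fun v w hne heq => hne (cayley_layerPairs_adj.1 heq).1
  suffices hunion : ⊤ \ cayley Vertex {(0, 2)} =
      (⊤ : SimpleGraph (ZMod 3)).comap Prod.fst ⊔ cayley Vertex (⋃ i, layerPairs i) from
    hunion ▸ (isEdgePartition_spiral ω).sumElim isEdgePartition_layerPairs hdisj
  ext v w
  have hmatching : (cayley Vertex {(0, 2)}).Adj v w ↔ v ≠ w ∧ v - w = (0, 2) :=
    cayley_adj (by decide)
  rw [sdiff_adj, hmatching, sup_adj, cayley_layerPairs_adj, comap_adj, top_adj, top_adj]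
  by_cases hlayer : v.1 = w.1
  · tauto
  · have hne : v ≠ w := ne_of_apply_ne _ hlayer
    have hsub : v - w ≠ (0, 2) := fun h => hlayer (sub_eq_zero.1 (congrArg Prod.fst h))
    tauto

/-- The elements of `Eis 2`, a field of order 4, index the four coarse factors that are traded for
four `C_3`-factors; only the one of index `0` is a `C_4`-factor. -/
def tradedIndex : Eis 2 ↪ Eis 4 ⊕ Fin 7 where
  toFun j := if j = 0 then .inr 0 else .inl (if j = 1 then 0 else if j = ω then ω else -ω)
  inj' := by decide

/-- The successor map of an orientation of the traded factor of index `j`. Since `spiral ω ω` has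
order 3, its square is its inverse: the factor of index `ω` is oriented against the spiral. -/
def step (j : Eis 2) : Vertex → Vertex :=
  if j = 0 then ((0, 1) + ·) else if j = 1 then spiral ω 0 else
    if j = ω then spiral ω ω ∘ spiral ω ω else spiral ω (-ω)

@[elab_as_elim]
theorem Eis.two_cases {p : Eis 2 → Prop} (zero : p 0) (one : p 1) (omega : p ω)
    (omega_sq : p (ω ^ 2)) (j : Eis 2) : p j := by
  have : j = 0 ∨ j = 1 ∨ j = ω ∨ j = ω ^ 2 := by decide +revert
  rcases this with rfl | rfl | rfl | rfl <;> assumption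

theorem step_zero : step 0 = ((0, 1) + ·) := rfl

theorem step_one : step 1 = spiral ω 0 := rfl

theorem step_omega : step ω = spiral ω ω ∘ spiral ω ω := rfl

theorem step_omega_sq : step (ω ^ 2) = spiral ω (-ω) := rfl

theorem coarseFactor_tradedIndex (j : Eis 2) :
    coarseFactor (tradedIndex j) = successorGraph (step j) := by
  induction j using Eis.two_cases with
  | zero =>
    rw [step_zero, ← cayley_pair_neg]
    have hpair (x : Vertex) : x ∈ layerPairs 0 ↔ x = (0, 1) ∨ x = -(0, 1) := by decide +revert
    exact congrArg (cayley Vertex) (Set.ext hpair)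
  | one => rfl
  | omega =>
    exact successorGraph_eq_of_leftInverse (spiral_omega_iterate_three ω)
      (spiral_omega_iterate_three ω)
  | omega_sq => rfl

theorem step_step_ne (j : Eis 2) (v : Vertex) : step j (step j v) ≠ v := by
  induction j using Eis.two_cases with
  | zero =>
    have htwo : (0, 1) + ((0, 1) + v) = (0, 2) + v := (add_assoc _ _ v).symm
    exact fun h => absurd (htwo.symm.trans h) (add_eq_right.not.2 (by decide))
  | one | omega_sq => exact spiral_spiral_ne _ _ _
  | omega =>
    rw [step_omega, Function.comp_apply, Function.comp_apply, spiral_omega_iterate_three]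
    exact spiral_ne _ _

/-- The index of the traded factor along which the new `C_3`-factor of index `t` leaves `v`. It is
chosen to depend bijectively on `t` and to evolve along that factor as in `phase_step`. -/
def phase (t : Eis 2) (v : Vertex) : Eis 2 :=
  Eis.red v.2 - ω ^ v.1.val * t

theorem phase_bijective (v : Vertex) : Function.Bijective fun t => phase t v := by
  have hunit : IsUnit ((ω : Eis 2) ^ v.1.val) :=
    (IsUnit.of_pow_eq_one (Eis.omega_pow_three 2) three_ne_zero).pow _
  exact (sub_right_injective.comp hunit.mul_right_injective).bijective_of_finite

theorem phase_spiral (t : Eis 2) (u : Eis 4) (v : Vertex) :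
    phase t (spiral ω u v) = ω * phase t v + Eis.red u := by
  have hred : Eis.red ω = ω := rfl
  simp only [phase, spiral, map_add, map_mul, hred, Eis.omega_pow_val_add_one]
  ring

/-- The map `j ↦ ω ^ 2 * j + 1` sends `0 ↦ 1 ↦ ω ↦ 0` and fixes `ω ^ 2`. -/
theorem phase_step (t : Eis 2) (v : Vertex) :
    phase t (step (phase t v) v) = ω ^ 2 * phase t v + 1 := by
  have hzero : phase t ((0, 1) + v) = phase t v + 1 := by
    simp only [phase, Prod.fst_add, Prod.snd_add, zero_add, map_add, map_one]
    ring
  generalize hj : phase t v = j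
  induction j using Eis.two_cases <;>
    simp only [step_zero, step_one, step_omega, step_omega_sq, Function.comp_apply, phase_spiral,
      hzero, hj] <;> decide

theorem spiral_zero_translate (v : Vertex) : spiral ω 0 ((0, 1) + v) = spiral ω ω v := by
  simp only [spiral, Prod.fst_add, Prod.snd_add, zero_add, mul_add, mul_one, add_zero, add_comm]

theorem step_step_step (j : Eis 2) (v : Vertex) :
    step (ω ^ 2 * (ω ^ 2 * j + 1) + 1) (step (ω ^ 2 * j + 1) (step j v)) = v := by
  have next_zero : (ω : Eis 2) ^ 2 * 0 + 1 = 1 := by decide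
  have next_one : (ω : Eis 2) ^ 2 * 1 + 1 = ω := by decide
  have next_omega : (ω : Eis 2) ^ 2 * ω + 1 = 0 := by decide
  have next_omega_sq : (ω : Eis 2) ^ 2 * ω ^ 2 + 1 = ω ^ 2 := by decide
  induction j using Eis.two_cases with
  | zero =>
    simp only [next_zero, next_one, step_zero, step_one, step_omega, Function.comp_apply,
      spiral_zero_translate, spiral_omega_iterate_three]
  | one =>
    obtain ⟨v, rfl⟩ := (AddGroup.addLeft_bijective ((0, 1) : Vertex)).surjective v
    simp only [next_one, next_omega, step_zero, step_one, step_omega, Function.comp_apply,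
      spiral_zero_translate, spiral_omega_iterate_three]
  | omega =>
    simp only [next_zero, next_omega, step_zero, step_one, step_omega, Function.comp_apply,
      spiral_zero_translate, spiral_omega_iterate_three]
  | omega_sq => simp only [next_omega_sq, step_omega_sq, spiral_omega_iterate_three]

theorem isCycleFactor_step_phase (t : Eis 2) :
    IsCycleFactor (successorGraph fun v => step (phase t v) v) 3 := by
  refine isCycleFactor_three_of_iterate
    (fun v h => step_step_ne (phase t v) v ((congrArg _ h).trans h)) fun v => ?_
  rw [phase_step t (step (phase t v) v), phase_step t v, step_step_step]

theorem isEdgePartition_step_phase :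
    IsEdgePartition (⨆ j, coarseFactor (tradedIndex j))
      fun t => successorGraph fun v => step (phase t v) v := by
  simp only [coarseFactor_tradedIndex]
  refine isEdgePartition_successorGraph_phase (fun i j hij => ?_) step_step_ne phase_bijective
  rw [← coarseFactor_tradedIndex, ← coarseFactor_tradedIndex]
  exact isEdgePartition_coarseFactor.disjoint (tradedIndex.injective.ne hij)

end Construction

theorem stmt_4 : HW 48 3 4 17 6 := by
  have hpartition := isEdgePartition_coarseFactor.exchange tradedIndex isEdgePartition_step_phase
  let isTriangular : Eis 2 ⊕ {c // c ∉ Set.range tradedIndex} → Bool :=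
    Sum.elim (fun _ => true) fun c => c.1.isLeft
  refine hpartition.hw_card (by decide) isOneFactor_cayley_two (isTriangular · = true) ?_ ?_
  · rintro (t | ⟨u | i, hc⟩) h
    · exact isCycleFactor_step_phase t
    · exact isCycleFactor_three_of_iterate (spiral_ne u) (spiral_omega_iterate_three u)
    · cases h
  · rintro (t | ⟨u | i, hc⟩) h
    · exact absurd rfl h
    · exact absurd rfl h
    · exact isCycleFactor_layerPairs i
end

section
/- For v = 75 and v = 105, there exists a 2-factorization of K_v into exactly (v−3)/2 C_3-factors and 1 C_5-factor. -/
open SimpleGraph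

/-!
Let `Γ` be an abelian group and `H ≤ Γ`. Base `m`-cycles whose vertices together meet every coset
of `H` exactly once tile `Γ` when translated by `H`, so they generate a `C_m`-factor; the translates
of this factor by representatives of `Γ ⧸ H` contain all translates of the base cycles. If `c : Γ`
has order `n`, joining every `x` to `x + c` gives a `C_n`-factor. If the differences along the base
cycles, together with `c`, exhaust the nonzero elements of `Γ` up to sign, then all edges are
covered, and if the number of factors is `(|Γ| - 1) / 2`, then by counting degrees none is covered
twice.

For `v = 15 k`, `k = 5, 7`, take `Γ = ℤ₅ × ℤ₃ₖ` and `c = (1, 0)`, and use triangles modulo each of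
the subgroups `ℤ₅ × 0`, `0 × 3ℤ₃ₖ` and `ℤ₅ × 3ℤ₃ₖ`.
-/

section MapGraph

variable {V : Type*} {f : V → V} {k : ℕ}

/-- The graph joining every `a` to `f a`: if all points have the same period `k ≥ 3` under `f`, it
is the disjoint union of the orbits of `f`, viewed as `k`-cycles. -/
def mapGraph (f : V → V) : SimpleGraph V :=
  SimpleGraph.fromRel (f · = ·)

theorem mapGraph_adj_of_apply_eq {a b : V} (h : f a = b) (hab : a ≠ b) : (mapGraph f).Adj a b :=
  ⟨hab, Or.inl h⟩

theorem mapGraph_adj_iff (hf : ∀ a, f a ≠ a) {a b : V} :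
    (mapGraph f).Adj a b ↔ f a = b ∨ f b = a := by
  simp only [mapGraph, SimpleGraph.fromRel_adj, and_iff_right_iff_imp]
  rintro (rfl | rfl)
  exacts [(hf _).symm, hf _]

theorem mapGraph_neighborSet_eq_pair (hf : ∀ a, f a ≠ a) (hk : k ≠ 0) (hper : f^[k] = id) (a : V) :
    (mapGraph f).neighborSet a = {f a, f^[k - 1] a} := by
  obtain ⟨l, rfl⟩ := Nat.exists_eq_succ_of_ne_zero hk
  ext b
  have hb : f b = a ↔ b = f^[l] a := by
    constructor <;> rintro rfl
    · rw [← Function.iterate_succ_apply, hper, id]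
    · rw [← Function.iterate_succ_apply' f, hper, id]
  simp [mapGraph_adj_iff hf, hb, eq_comm]

theorem mapGraph_reachable_iff (hf : ∀ a, f a ≠ a) (hk : k ≠ 0) (hper : f^[k] = id) {a b : V} :
    (mapGraph f).Reachable a b ↔ ∃ i, f^[i] a = b := by
  constructor
  · rw [SimpleGraph.reachable_iff_reflTransGen]
    intro h
    induction h with
    | refl => exact ⟨0, rfl⟩
    | tail _ hadj ih =>
      obtain ⟨i, rfl⟩ := ih
      rw [← SimpleGraph.mem_neighborSet, mapGraph_neighborSet_eq_pair hf hk hper] at hadj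
      obtain rfl | rfl := hadj
      · exact ⟨i + 1, Function.iterate_succ_apply' f i a⟩
      · exact ⟨k - 1 + i, Function.iterate_add_apply f _ i a⟩
  · rintro ⟨i, rfl⟩
    induction i with
    | zero => rfl
    | succ i ih =>
      rw [Function.iterate_succ_apply']
      exact ih.trans ((mapGraph_adj_iff hf).2 (Or.inl rfl)).reachable

theorem isCycleFactor_mapGraph (hk : 3 ≤ k) (hper : ∀ a, Function.minimalPeriod f a = k) :
    IsCycleFactor (mapGraph f) k := by
  have hk0 : k ≠ 0 := by lia
  have hid : f^[k] = id := funext fun a => hper a ▸ Function.iterate_minimalPeriod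
  have hf : ∀ a, f a ≠ a := fun a ha => by
    have := hper a ▸ Function.minimalPeriod_eq_one_iff_isFixedPt.2 ha
    lia
  have hinj : ∀ a, Set.InjOn (f^[·] a) (Set.Iio k) := fun a =>
    hper a ▸ Function.iterate_injOn_Iio_minimalPeriod
  refine ⟨fun a => ?_, fun a => ?_⟩
  · rw [mapGraph_neighborSet_eq_pair hf hk0 hid]
    refine Set.ncard_pair fun h => ?_
    have := hinj a (Set.mem_Iio.2 (by lia : 1 < k)) (Set.mem_Iio.2 (by lia : k - 1 < k)) h
    lia
  · have hsupp : ((mapGraph f).connectedComponentMk a).supp = (f^[·] a) '' Set.Iio k := by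
      ext b
      rw [SimpleGraph.ConnectedComponent.mem_supp_iff, SimpleGraph.ConnectedComponent.eq,
        SimpleGraph.reachable_comm, mapGraph_reachable_iff hf hk0 hid]
      refine ⟨?_, fun ⟨i, _, hi⟩ => ⟨i, hi⟩⟩
      rintro ⟨i, rfl⟩
      refine ⟨i % k, Nat.mod_lt _ (by lia), ?_⟩
      simpa only [hper a] using Function.iterate_mod_minimalPeriod_eq (f := f) (x := a) (n := i)
    rw [hsupp, (hinj a).ncard_image, Set.ncard_Iio_nat]

end MapGraph

section CycleFactor

variable {V : Type*} {ι κ : Type*}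

theorem IsCycleFactor.of_iso {W : Type*} {G : SimpleGraph V} {H : SimpleGraph W} {k : ℕ}
    (e : G ≃g H) (hH : IsCycleFactor H k) : IsCycleFactor G k := by
  refine ⟨fun a => ?_, fun a => ?_⟩
  · rw [← hH.1 (e a)]
    exact Nat.card_congr (e.mapNeighborSet a)
  · rw [← hH.2 (e a)]
    exact Nat.card_congr (SimpleGraph.ConnectedComponent.isoEquivSupp e _)

theorem pairwise_disjoint_edgeSet_of_regular_cover [Fintype V] [Fintype ι] {G : ι → SimpleGraph V}
    {r : ℕ} (hreg : ∀ i a, ((G i).neighborSet a).ncard = r)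
    (hcover : ∀ a b, a ≠ b → ∃ i, (G i).Adj a b)
    (hcard : Fintype.card V = r * Fintype.card ι + 1) :
    Pairwise fun i j => Disjoint (G i).edgeSet (G j).edgeSet := by
  intro i j hij
  rw [Set.disjoint_left]
  intro e
  induction e using Sym2.ind with
  | _ a b =>
    intro hi hj
    let toNeighbor : (Σ i, (G i).neighborSet a) → {b // b ≠ a} := fun p => ⟨p.2, p.2.2.ne'⟩
    have hsurj : Function.Surjective toNeighbor := fun ⟨b, hb⟩ =>
      (hcover a b hb.symm).elim fun i hi => ⟨⟨i, b, hi⟩, rfl⟩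
    have hle : Nat.card (Σ i, (G i).neighborSet a) ≤ Nat.card {b // b ≠ a} := by
      classical
      rw [Nat.card_sigma, Nat.card_eq_fintype_card, Fintype.card_subtype_compl,
        Fintype.card_subtype_eq, hcard]
      simp only [Nat.card_coe_set_eq, hreg, Finset.sum_const, Finset.card_univ, smul_eq_mul,
        Nat.add_sub_cancel, mul_comm, le_refl]
    have hbij := hsurj.bijective_of_nat_card_le hle
    exact hij (congrArg Sigma.fst (@hbij.1 ⟨i, b, hi⟩ ⟨j, b, hj⟩ rfl))

theorem isDecompOn_top_of_cover {G : ℕ → SimpleGraph V} {N : ℕ}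
    (hdisj : ∀ i < N, ∀ j < N, i ≠ j → Disjoint (G i).edgeSet (G j).edgeSet)
    (hcover : ∀ a b, a ≠ b → ∃ i < N, (G i).Adj a b) : IsDecompOn ⊤ G N := by
  refine ⟨fun _ _ => le_top, hdisj, ?_⟩
  ext e
  induction e using Sym2.ind with
  | _ a b =>
    simp only [SimpleGraph.mem_edgeSet, SimpleGraph.top_adj, Set.mem_iUnion, Set.mem_Iio,
      exists_prop]
    exact ⟨hcover a b, fun ⟨_, _, h⟩ => h.ne⟩

theorem isHWGraph_top_of_cover [Fintype V] {m n α β : ℕ}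
    {G : Fin α → SimpleGraph V} {H : Fin β → SimpleGraph V}
    (hG : ∀ i, IsCycleFactor (G i) m) (hH : ∀ j, IsCycleFactor (H j) n)
    (hcover : ∀ a b, a ≠ b → (∃ i, (G i).Adj a b) ∨ ∃ j, (H j).Adj a b)
    (hcard : Fintype.card V = 2 * (α + β) + 1) : IsHWGraph (⊤ : SimpleGraph V) m n α β := by
  let A : Fin (α + β) → SimpleGraph V := Fin.append G H
  let F : ℕ → SimpleGraph V := fun i => if hi : i < α + β then A ⟨i, hi⟩ else ⊥
  have hF : ∀ i : Fin (α + β), F i = A i := fun i => dif_pos i.2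
  have hFG : ∀ i : Fin α, F i = G i := fun i =>
    (hF (i.castAdd β)).trans (Fin.append_left G H i)
  have hFH : ∀ j : Fin β, F (α + j) = H j := fun j =>
    (hF (j.natAdd α)).trans (Fin.append_right G H j)
  have hreg : ∀ i a, ((A i).neighborSet a).ncard = 2 :=
    Fin.addCases (fun i => by simpa only [A, Fin.append_left] using (hG i).1)
      (fun j => by simpa only [A, Fin.append_right] using (hH j).1)
  have hAcover : ∀ a b, a ≠ b → ∃ i, (A i).Adj a b := by
    intro a b hab
    obtain ⟨i, hi⟩ | ⟨j, hj⟩ := hcover a b hab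
    · exact ⟨i.castAdd β, by simpa only [A, Fin.append_left] using hi⟩
    · exact ⟨j.natAdd α, by simpa only [A, Fin.append_right] using hj⟩
  have hdisj := pairwise_disjoint_edgeSet_of_regular_cover hreg hAcover
    (by rwa [Fintype.card_fin])
  refine ⟨F, isDecompOn_top_of_cover ?_ ?_, fun i hi => ?_, fun i hi hi' => ?_⟩
  · intro i hi j hj hij
    rw [hF ⟨i, hi⟩, hF ⟨j, hj⟩]
    exact hdisj (Fin.ne_of_val_ne hij)
  · intro a b hab
    obtain ⟨i, hi⟩ := hAcover a b hab
    exact ⟨i, i.2, (hF i).symm ▸ hi⟩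
  · exact (hFG ⟨i, hi⟩).symm ▸ hG _
  · obtain ⟨j, rfl⟩ := Nat.exists_eq_add_of_le hi
    exact (hFH ⟨j, by lia⟩).symm ▸ hH _

theorem hw_of_cover [Fintype V] [Fintype ι] [Fintype κ] {m n : ℕ}
    {G : ι → SimpleGraph V} {H : κ → SimpleGraph V}
    (hG : ∀ i, IsCycleFactor (G i) m) (hH : ∀ j, IsCycleFactor (H j) n)
    (hcover : ∀ a b, a ≠ b → (∃ i, (G i).Adj a b) ∨ ∃ j, (H j).Adj a b)
    (hcard : Fintype.card V = 2 * (Fintype.card ι + Fintype.card κ) + 1) :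
    HW (Fintype.card V) m n (Fintype.card ι) (Fintype.card κ) := by
  let e := (Fintype.equivFin V).symm
  have hodd : Odd (Fintype.card V) := ⟨_, hcard⟩
  refine ⟨⊥, fun _ => rfl, fun heven => absurd hodd (Nat.not_odd_iff_even.2 heven), ?_⟩
  rw [sdiff_bot]
  refine isHWGraph_top_of_cover
    (G := fun i => (G ((Fintype.equivFin ι).symm i)).comap e)
    (H := fun j => (H ((Fintype.equivFin κ).symm j)).comap e)
    (fun i => (hG _).of_iso (SimpleGraph.Iso.comap e _))
    (fun j => (hH _).of_iso (SimpleGraph.Iso.comap e _)) (fun a b hab => ?_)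
    (by rwa [Fintype.card_fin])
  exact (hcover _ _ (e.injective.ne hab)).imp
    (fun ⟨i, hi⟩ => ⟨Fintype.equivFin ι i, by
      simpa only [SimpleGraph.comap_adj, Equiv.symm_apply_apply] using hi⟩)
    (fun ⟨j, hj⟩ => ⟨Fintype.equivFin κ j, by
      simpa only [SimpleGraph.comap_adj, Equiv.symm_apply_apply] using hj⟩)

end CycleFactor

/-- Base `m`-cycles `vertex k 0, …, vertex k (m - 1)`, `k < size`, in `Γ` whose vertices represent
each coset of the subgroup `period` exactly once, so that their translates by `period` form a
`C_m`-factor on `Γ`. -/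
structure CycleStarter (Γ : Type*) [AddCommGroup Γ] (m : ℕ) where
  period : AddSubgroup Γ
  size : ℕ
  vertex : Fin size → ZMod m → Γ
  existsUnique_sub_mem : ∀ x, ∃! p : Fin size × ZMod m, x - vertex p.1 p.2 ∈ period

namespace CycleStarter

variable {Γ : Type*} [AddCommGroup Γ] {m : ℕ}

/-- The starter with period `φ.ker`, for which the coset condition becomes bijectivity of `φ` on the
vertices. -/
def ofHom {Q : Type*} [AddGroup Q] (φ : Γ →+ Q) {size : ℕ} (vertex : Fin size → ZMod m → Γ)
    (h : Function.Bijective fun p : Fin size × ZMod m => φ (vertex p.1 p.2)) :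
    CycleStarter Γ m where
  period := φ.ker
  size := size
  vertex := vertex
  existsUnique_sub_mem x := by
    simpa only [AddMonoidHom.mem_ker, map_sub, sub_eq_zero, eq_comm (a := φ x)]
      using h.existsUnique (φ x)

variable (S : CycleStarter Γ m)

/-- The starter with every base cycle translated by `t`. -/
def translate (t : Γ) : CycleStarter Γ m where
  period := S.period
  size := S.size
  vertex k j := t + S.vertex k j
  existsUnique_sub_mem x := by
    simpa only [sub_sub] using S.existsUnique_sub_mem (x - t)

/-- The successor of `x` on the unique cycle through `x` among the translates of the base cycles
by `S.period`. -/
noncomputable def next (x : Γ) : Γ :=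
  let p := (S.existsUnique_sub_mem x).choose
  x - S.vertex p.1 p.2 + S.vertex p.1 (p.2 + 1)

variable {S}

theorem next_add_vertex {h : Γ} (hh : h ∈ S.period) (k : Fin S.size) (j : ZMod m) :
    S.next (h + S.vertex k j) = h + S.vertex k (j + 1) := by
  have hex := S.existsUnique_sub_mem (h + S.vertex k j)
  have hchoose : hex.choose = (k, j) :=
    hex.unique hex.choose_spec.1 (by rwa [add_sub_cancel_right])
  rw [next, hchoose, add_sub_cancel_right]

theorem iterate_next_add_vertex {h : Γ} (hh : h ∈ S.period) (k : Fin S.size) (j : ZMod m)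
    (i : ℕ) : S.next^[i] (h + S.vertex k j) = h + S.vertex k (j + i) := by
  induction i with
  | zero => rw [Function.iterate_zero, id, Nat.cast_zero, add_zero]
  | succ i ih => rw [Function.iterate_succ_apply', ih, next_add_vertex hh, Nat.cast_succ, add_assoc]

variable (S)

theorem minimalPeriod_next (x : Γ) : Function.minimalPeriod S.next x = m := by
  obtain ⟨⟨k, j⟩, hkj, -⟩ := S.existsUnique_sub_mem x
  obtain ⟨h, hh, rfl⟩ : ∃ h ∈ S.period, x = h + S.vertex k j := ⟨_, hkj, (sub_add_cancel _ _).symm⟩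
  have hperiodic (i : ℕ) :
      Function.IsPeriodicPt S.next i (h + S.vertex k j) ↔ (i : ZMod m) = 0 := by
    rw [Function.IsPeriodicPt, Function.IsFixedPt, iterate_next_add_vertex hh, add_right_inj]
    refine ⟨fun hv => ?_, fun hi => by rw [hi, add_zero]⟩
    have := (S.existsUnique_sub_mem (S.vertex k j)).unique (y₁ := (k, j + i)) (y₂ := (k, j))
      (by simp only [hv, sub_self, S.period.zero_mem])
      (by simp only [sub_self, S.period.zero_mem])
    simpa only [Prod.mk.injEq, true_and, add_eq_left] using this
  refine Nat.dvd_right_iff_eq.1 fun i => ?_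
  rw [← Function.isPeriodicPt_iff_minimalPeriod_dvd, hperiodic, ZMod.natCast_eq_zero_iff]

/-- `d` is the difference of two consecutive vertices of a base cycle. -/
def IsDifference (d : Γ) : Prop :=
  ∃ k j, d = S.vertex k (j + 1) - S.vertex k j

instance [NeZero m] [DecidableEq Γ] : DecidablePred S.IsDifference :=
  fun d => inferInstanceAs (Decidable (∃ k j, d = S.vertex k (j + 1) - S.vertex k j))

variable {S} in
theorem IsDifference.exists_next_translate_eq {d : Γ} (hd : S.IsDifference d) (x : Γ) :
    ∃ p : Fin S.size × ZMod m, (S.translate (S.vertex p.1 p.2)).next x = x + d := by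
  obtain ⟨k, j, rfl⟩ := hd
  obtain ⟨p, hp, -⟩ := S.existsUnique_sub_mem (x - S.vertex k j)
  let t := S.vertex p.1 p.2
  refine ⟨p, ?_⟩
  calc (S.translate t).next x
      = (S.translate t).next (x - S.vertex k j - t + (t + S.vertex k j)) := by congr 1; abel
    _ = x - S.vertex k j - t + (t + S.vertex k (j + 1)) :=
      next_add_vertex (S := S.translate t) hp k j
    _ = x + (S.vertex k (j + 1) - S.vertex k j) := by abel

end CycleStarter

theorem minimalPeriod_add_right {Γ : Type*} [AddGroup Γ] (c x : Γ) :
    Function.minimalPeriod (· + c) x = addOrderOf c := by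
  refine Nat.dvd_right_iff_eq.1 fun i => ?_
  rw [← Function.isPeriodicPt_iff_minimalPeriod_dvd, addOrderOf_dvd_iff_nsmul_eq_zero,
    Function.IsPeriodicPt, Function.IsFixedPt, add_right_iterate_apply, add_eq_left]

theorem hw_of_cycleStarters {Γ ι : Type*} [AddCommGroup Γ] [Fintype Γ] [Fintype ι] {v m n α : ℕ}
    (S : ι → CycleStarter Γ m) {c : Γ} (hm : 3 ≤ m) (hn : 3 ≤ n) (hc : addOrderOf c = n)
    (hdiff : ∀ d : Γ, d ≠ 0 →
      ((∃ i, (S i).IsDifference d) ∨ d = c) ∨ ((∃ i, (S i).IsDifference (-d)) ∨ -d = c))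
    (hα : ∑ i, (S i).size * m = α) (hΓ : Fintype.card Γ = v) (hv : v = 2 * (α + 1) + 1) :
    HW v m n α 1 := by
  have : NeZero m := ⟨by lia⟩
  let G : (Σ i, Fin (S i).size × ZMod m) → SimpleGraph Γ := fun ⟨i, k, j⟩ =>
    mapGraph ((S i).translate ((S i).vertex k j)).next
  let H : Unit → SimpleGraph Γ := fun _ => mapGraph (· + c)
  have hcover {a b : Γ} (hab : a ≠ b) (hd : (∃ i, (S i).IsDifference (b - a)) ∨ b - a = c) :
      (∃ p, (G p).Adj a b) ∨ ∃ u, (H u).Adj a b := by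
    refine hd.imp ?_ fun hd => ⟨(), mapGraph_adj_of_apply_eq (add_eq_of_eq_sub' hd.symm) hab⟩
    rintro ⟨i, hd⟩
    obtain ⟨p, hp⟩ := hd.exists_next_translate_eq a
    exact ⟨⟨i, p⟩, mapGraph_adj_of_apply_eq (hp.trans (add_sub_cancel a b)) hab⟩
  have hindex : Fintype.card (Σ i, Fin (S i).size × ZMod m) = α := by
    simp only [Fintype.card_sigma, Fintype.card_prod, Fintype.card_fin, ZMod.card, hα]
  rw [← hΓ, ← hindex, ← Fintype.card_unit]
  refine hw_of_cover (G := G) (H := H)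
    (fun _ => isCycleFactor_mapGraph hm (CycleStarter.minimalPeriod_next _))
    (fun _ => isCycleFactor_mapGraph hn fun a => (minimalPeriod_add_right c a).trans hc)
    (fun a b hab => ?_) (by rw [hindex, Fintype.card_unit, hΓ, hv])
  obtain hd | hd := hdiff (b - a) (sub_ne_zero.2 hab.symm)
  · exact hcover hab hd
  · rw [neg_sub] at hd
    simpa only [SimpleGraph.adj_comm] using hcover hab.symm hd

theorem addOrderOf_one_zero (n : ℕ) {B : Type*} [AddMonoid B] :
    addOrderOf ((1, 0) : ZMod n × B) = n := by
  rw [Prod.addOrderOf_mk, addOrderOf_zero, Nat.lcm_one_right, ZMod.addOrderOf_one]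

/-- Reduction modulo `m` of the second coordinate, with kernel `A × mℤₖ`. -/
def sndMod {A : Type*} [AddMonoid A] {m k : ℕ} (h : m ∣ k) : A × ZMod k →+ ZMod m :=
  (ZMod.castHom h (ZMod m)).toAddMonoidHom.comp (AddMonoidHom.snd _ _)

/-- Base triangles in `ℤ₅ × ℤ₁₅`, found by computer search, with periods `ℤ₅ × 0`, `0 × 3ℤ₁₅` and
(twice) `ℤ₅ × 3ℤ₁₅`. -/
def starters75 : Fin 4 → CycleStarter (ZMod 5 × ZMod 15) 3 :=
  ![.ofHom (AddMonoidHom.snd _ _)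
      ![![(0, 0), (4, 9), (4, 12)], ![(0, 1), (4, 3), (4, 7)], ![(0, 2), (0, 8), (3, 13)],
        ![(0, 4), (1, 5), (3, 6)], ![(0, 10), (1, 14), (4, 11)]] (by decide +kernel),
    .ofHom ((AddMonoidHom.fst _ _).prod (sndMod (by decide : 3 ∣ 15)))
      ![![(0, 0), (0, 5), (3, 9)], ![(0, 1), (1, 6), (4, 4)], ![(1, 1), (1, 14), (3, 8)],
        ![(2, 0), (2, 7), (4, 0)], ![(2, 2), (3, 4), (4, 14)]] (by decide +kernel),
    .ofHom (sndMod (by decide : 3 ∣ 15)) ![![(0, 0), (0, 1), (1, 8)]] (by decide +kernel),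
    .ofHom (sndMod (by decide : 3 ∣ 15)) ![![(0, 0), (1, 11), (3, 10)]] (by decide +kernel)]

/-- Base triangles in `ℤ₅ × ℤ₂₁`, found by computer search, with periods `ℤ₅ × 0`, `0 × 3ℤ₂₁` and
(five times) `ℤ₅ × 3ℤ₂₁`. -/
def starters105 : Fin 7 → CycleStarter (ZMod 5 × ZMod 21) 3 :=
  ![.ofHom (AddMonoidHom.snd _ _)
      ![![(0, 0), (3, 5), (4, 4)], ![(0, 1), (0, 7), (3, 18)], ![(0, 2), (2, 11), (3, 16)],
        ![(0, 3), (4, 13), (4, 14)], ![(0, 6), (1, 9), (4, 19)], ![(0, 8), (0, 20), (1, 17)],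
        ![(0, 10), (4, 12), (4, 15)]] (by decide +kernel),
    .ofHom ((AddMonoidHom.fst _ _).prod (sndMod (by decide : 3 ∣ 21)))
      ![![(0, 0), (3, 6), (3, 16)], ![(0, 1), (1, 16), (2, 1)], ![(0, 2), (2, 14), (4, 11)],
        ![(1, 0), (4, 7), (4, 15)], ![(1, 2), (2, 3), (3, 5)]] (by decide +kernel),
    .ofHom (sndMod (by decide : 3 ∣ 21)) ![![(0, 0), (0, 2), (0, 7)]] (by decide +kernel),
    .ofHom (sndMod (by decide : 3 ∣ 21)) ![![(0, 0), (0, 4), (2, 2)]] (by decide +kernel),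
    .ofHom (sndMod (by decide : 3 ∣ 21)) ![![(0, 0), (1, 4), (4, 8)]] (by decide +kernel),
    .ofHom (sndMod (by decide : 3 ∣ 21)) ![![(0, 0), (1, 7), (3, 20)]] (by decide +kernel),
    .ofHom (sndMod (by decide : 3 ∣ 21)) ![![(0, 0), (1, 14), (3, 13)]] (by decide +kernel)]

theorem isDifference_starters75_or_neg (d : ZMod 5 × ZMod 15) (hd : d ≠ 0) :
    ((∃ i, (starters75 i).IsDifference d) ∨ d = (1, 0)) ∨
      ((∃ i, (starters75 i).IsDifference (-d)) ∨ -d = (1, 0)) := by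
  decide +kernel +revert

theorem isDifference_starters105_or_neg (d : ZMod 5 × ZMod 21) (hd : d ≠ 0) :
    ((∃ i, (starters105 i).IsDifference d) ∨ d = (1, 0)) ∨
      ((∃ i, (starters105 i).IsDifference (-d)) ∨ -d = (1, 0)) := by
  decide +kernel +revert

theorem stmt_11 : HW 75 3 5 ((75 - 3) / 2) 1 ∧ HW 105 3 5 ((105 - 3) / 2) 1 := by
  constructor
  · exact hw_of_cycleStarters starters75 (by decide) (by decide) (addOrderOf_one_zero 5)
      isDifference_starters75_or_neg (by decide) (by decide) (by decide)
  · exact hw_of_cycleStarters starters105 (by decide) (by decide) (addOrderOf_one_zero 5)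
      isDifference_starters105_or_neg (by decide) (by decide) (by decide)
end

section
/- For every pair of nonnegative integers (α, β) with α + β = 14, there exists a partition of the edge set of K_30 minus a perfect matching into α C_3-factors and β C_5-factors. That is, HWP(30; 3, 5) = {(α, β) : α + β = 14}. -/
open SimpleGraph

/-!
Take the vertex set `ℤ/30` and the perfect matching `{x, x + 15}`. The remaining differences split
as `±{1, 10, 11, 12}` and `±{2, …, 9, 13, 14}`. The Cayley graph of the first set has a
decomposition into `a` triangle factors and `4 - a` pentagon factors for every `a ≤ 4`. For the
second set there are two triangle factors and two pentagon factors such that the five translates by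
multiples of `6` of the `i`-th triangle factor use the same edges as those of the `i`-th pentagon
factor; this gives `5 * b` triangle factors and `10 - 5 * b` pentagon factors for `b ≤ 2`. Every
`α ≤ 14` is `a + 5 * b` for some such `a` and `b`.

Disjointness needs no separate check: a regular graph of degree `2 * N` whose edges are covered by
`N` two-regular graphs is decomposed by them. Conversely, the degree `28` of a vertex forces
`α + β = 14`.
-/

open Equiv Function

section Decomposition

variable {V : Type*}

theorem pairwiseDisjoint_and_biUnion_eq_of_sum_card_le {ι α : Type*} [DecidableEq α]
    {s : Finset ι} {S : ι → Finset α} {T : Finset α} (hT : T ⊆ s.biUnion S)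
    (hcard : ∑ i ∈ s, (S i).card ≤ T.card) :
    (s : Set ι).PairwiseDisjoint S ∧ s.biUnion S = T := by
  have himage : (s.sigma S).image Sigma.snd = s.biUnion S := by ext; simp
  rw [← Finset.card_sigma] at hcard
  have himage_le : ((s.sigma S).image Sigma.snd).card ≤ (s.sigma S).card := Finset.card_image_le
  have hinj : Set.InjOn Sigma.snd (s.sigma S : Set (Σ _ : ι, α)) :=
    Finset.card_image_iff.mp <| himage_le.antisymm <|
      hcard.trans (Finset.card_le_card (himage ▸ hT))
  refine ⟨fun i hi j hj hij => Finset.disjoint_left.mpr fun w hwi hwj => hij ?_, ?_⟩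
  · have hpair : (⟨i, w⟩ : Σ _ : ι, α) = ⟨j, w⟩ := hinj (by simp_all) (by simp_all) rfl
    exact congrArg Sigma.fst hpair
  · exact (Finset.eq_of_subset_of_card_le hT (himage ▸ himage_le.trans hcard)).symm

theorem IsDecompOn.of_cover [Finite V] {G : SimpleGraph V} {F : ℕ → SimpleGraph V} {N : ℕ}
    (hcover : ∀ v w, G.Adj v w → ∃ i < N, (F i).Adj v w)
    (hdeg : ∀ v, ∑ i ∈ Finset.range N, ((F i).neighborSet v).ncard ≤ (G.neighborSet v).ncard) :
    IsDecompOn G F N := by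
  classical
  have := Fintype.ofFinite V
  have hlocal (v : V) := pairwiseDisjoint_and_biUnion_eq_of_sum_card_le
    (s := Finset.range N) (S := fun i => ((F i).neighborSet v).toFinset)
    (T := (G.neighborSet v).toFinset)
    (fun w hw => by simpa using hcover v w (by simpa using hw))
    (by simpa only [Set.ncard_eq_toFinset_card'] using hdeg v)
  have hadj (v w : V) : G.Adj v w ↔ ∃ i < N, (F i).Adj v w := by
    simpa using (Finset.ext_iff.mp (hlocal v).2 w).symm
  refine ⟨fun i hi v w hvw => (hadj v w).mpr ⟨i, hi, hvw⟩, fun i hi j hj hij => ?_, ?_⟩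
  · refine Set.disjoint_left.mpr (Sym2.ind fun v w hvi hvj => ?_)
    exact Finset.disjoint_left.mp ((hlocal v).1 (by simpa using hi) (by simpa using hj) hij)
      (Set.mem_toFinset.mpr hvi) (Set.mem_toFinset.mpr hvj)
  · ext ⟨v, w⟩
    simpa using hadj v w

theorem IsDecompOn.ncard_neighborSet [Finite V] {G : SimpleGraph V} {F : ℕ → SimpleGraph V}
    {N : ℕ} (h : IsDecompOn G F N) (v : V) :
    (G.neighborSet v).ncard = ∑ i ∈ Finset.range N, ((F i).neighborSet v).ncard := by
  obtain ⟨-, hdisj, hunion⟩ := h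
  have hneighbor : G.neighborSet v = ⋃ i ∈ Set.Iio N, (F i).neighborSet v := by
    ext w
    simpa using Set.ext_iff.mp hunion s(v, w)
  rw [hneighbor, (Set.finite_Iio N).ncard_biUnion (fun _ _ => Set.toFinite _), ← Finset.coe_range,
    finsum_mem_coe_finset]
  intro i hi j hj hij
  have hdisj_edge := Set.disjoint_left.mp (hdisj i hi j hj hij)
  exact Set.disjoint_left.mpr fun w hwi hwj => @hdisj_edge s(v, w) hwi hwj

theorem sum_ncard_neighborSet_of_isCycleFactor {F : ℕ → SimpleGraph V} {m n α β : ℕ}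
    (hm : ∀ i < α, IsCycleFactor (F i) m)
    (hn : ∀ i, α ≤ i → i < α + β → IsCycleFactor (F i) n) (v : V) :
    ∑ i ∈ Finset.range (α + β), ((F i).neighborSet v).ncard = 2 * (α + β) := by
  have hdeg : ∀ i ∈ Finset.range (α + β), ((F i).neighborSet v).ncard = 2 := by
    intro i hi
    rcases lt_or_ge i α with h | h
    · exact (hm i h).1 v
    · exact (hn i h (Finset.mem_range.mp hi)).1 v
  rw [Finset.sum_congr rfl hdeg, Finset.sum_const, Finset.card_range, smul_eq_mul, mul_comm]

theorem IsHWGraph.ncard_neighborSet [Finite V] {G : SimpleGraph V} {m n α β : ℕ}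
    (h : IsHWGraph G m n α β) (v : V) : (G.neighborSet v).ncard = 2 * (α + β) := by
  obtain ⟨F, hF, hm, hn⟩ := h
  rw [hF.ncard_neighborSet, sum_ncard_neighborSet_of_isCycleFactor hm hn]

theorem IsOneFactor.ncard_neighborSet_top_sdiff [Finite V] {I : SimpleGraph V}
    (hI : IsOneFactor I) (v : V) :
    (((⊤ : SimpleGraph V) \ I).neighborSet v).ncard + 2 = Nat.card V := by
  have hneighbor : ((⊤ : SimpleGraph V) \ I).neighborSet v = (insert v (I.neighborSet v))ᶜ := by
    ext w
    simp [eq_comm]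
  have hinsert : (insert v (I.neighborSet v)).ncard = 2 := by
    rw [Set.ncard_insert_of_notMem (I.notMem_neighborSet_self), hI v]
  rw [hneighbor, ← hinsert, add_comm, Set.ncard_add_ncard_compl]

theorem HW.two_mul_add_two {v m n α β : ℕ} [NeZero v] (hv : Even v) (h : HW v m n α β) :
    2 * (α + β) + 2 = v := by
  obtain ⟨I, -, hI, hdecomp⟩ := h
  rw [← hdecomp.ncard_neighborSet 0, (hI hv).ncard_neighborSet_top_sdiff, Nat.card_fin]

/-- The edges of `G` are covered by `α` many `C_m`-factors and `β` many `C_n`-factors of the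
complete graph. The factors need be neither edge-disjoint nor subgraphs of `G`, so that covers are
easy to check and combine; if `G` has enough edges, they nevertheless decompose `G`. -/
def HasCycleFactorCover (G : SimpleGraph V) (m n α β : ℕ) : Prop :=
  ∃ A B : List (SimpleGraph V), A.length = α ∧ B.length = β ∧
    (∀ H ∈ A, IsCycleFactor H m) ∧ (∀ H ∈ B, IsCycleFactor H n) ∧
    ∀ v w, G.Adj v w → ∃ H ∈ A ++ B, H.Adj v w

theorem HasCycleFactorCover.mono {G G' : SimpleGraph V} {m n α β : ℕ} (hG : G ≤ G')
    (h : HasCycleFactorCover G' m n α β) : HasCycleFactorCover G m n α β :=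
  let ⟨A, B, hα, hβ, hA, hB, hcover⟩ := h
  ⟨A, B, hα, hβ, hA, hB, fun v w hvw => hcover v w (hG hvw)⟩

theorem HasCycleFactorCover.sup {G G' : SimpleGraph V} {m n α β α' β' : ℕ}
    (h : HasCycleFactorCover G m n α β) (h' : HasCycleFactorCover G' m n α' β') :
    HasCycleFactorCover (G ⊔ G') m n (α + α') (β + β') := by
  obtain ⟨A, B, rfl, rfl, hA, hB, hcover⟩ := h
  obtain ⟨A', B', rfl, rfl, hA', hB', hcover'⟩ := h'
  refine ⟨A ++ A', B ++ B', List.length_append, List.length_append, ?_, ?_, ?_⟩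
  · exact fun H hH => (List.mem_append.mp hH).elim (hA H) (hA' H)
  · exact fun H hH => (List.mem_append.mp hH).elim (hB H) (hB' H)
  · rintro v w (hvw | hvw)
    · obtain ⟨H, hH, hadj⟩ := hcover v w hvw
      exact ⟨H, by grind, hadj⟩
    · obtain ⟨H, hH, hadj⟩ := hcover' v w hvw
      exact ⟨H, by grind, hadj⟩

theorem HasCycleFactorCover.isHWGraph [Finite V] {G : SimpleGraph V} {m n α β : ℕ}
    (h : HasCycleFactorCover G m n α β) (hG : ∀ v, 2 * (α + β) ≤ (G.neighborSet v).ncard) :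
    IsHWGraph G m n α β := by
  obtain ⟨A, B, rfl, rfl, hA, hB, hcover⟩ := h
  let F : ℕ → SimpleGraph V := fun i => (A ++ B).getD i ⊥
  have hFA : ∀ i < A.length, IsCycleFactor (F i) m := by grind
  have hFB : ∀ i, A.length ≤ i → i < A.length + B.length → IsCycleFactor (F i) n := by grind
  refine ⟨F, .of_cover (fun v w hvw => ?_) fun v => ?_, hFA, hFB⟩
  · obtain ⟨H, hH, hadj⟩ := hcover v w hvw
    obtain ⟨i, hi, rfl⟩ := List.getElem_of_mem hH
    exact ⟨i, by simpa using hi, by simpa only [F, List.getD_eq_getElem _ _ hi] using hadj⟩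
  · rw [sum_ncard_neighborSet_of_isCycleFactor hFA hFB]
    exact hG v

theorem HasCycleFactorCover.hw {v m n α β : ℕ} {I : SimpleGraph (Fin v)} (hI : IsOneFactor I)
    (h : HasCycleFactorCover (⊤ \ I) m n α β) (hv : Even v) (hcount : 2 * (α + β) + 2 = v) :
    HW v m n α β := by
  refine ⟨I, fun hodd => absurd hv (Nat.not_even_iff_odd.mpr hodd), fun _ => hI, ?_⟩
  refine h.isHWGraph fun u => ?_
  have hdegree := hI.ncard_neighborSet_top_sdiff u
  rw [Nat.card_fin] at hdegree
  omega

end Decomposition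

section PermGraph

variable {V : Type*}

/-- The graph joining every vertex to its image under `σ`: its components are the cycles of `σ`. -/
def permGraph (σ : Perm V) : SimpleGraph V := fromRel fun v w => σ v = w

theorem permGraph_adj {σ : Perm V} {v w : V} :
    (permGraph σ).Adj v w ↔ v ≠ w ∧ (σ v = w ∨ σ w = v) :=
  Iff.rfl

theorem permGraph_reachable_iff_sameCycle {σ : Perm V} {v w : V} :
    (permGraph σ).Reachable v w ↔ σ.SameCycle v w := by
  have step : ∀ x, (permGraph σ).Reachable x (σ x) := fun x => by
    rcases eq_or_ne x (σ x) with hx | hx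
    · rw [← hx]
    · exact (permGraph_adj.mpr ⟨hx, .inl rfl⟩).reachable
  refine ⟨?_, ?_⟩
  · rintro ⟨p⟩
    induction p with
    | nil => exact .rfl
    | cons hadj _ ih =>
      obtain ⟨-, rfl | rfl⟩ := permGraph_adj.mp hadj
      · exact Perm.sameCycle_apply_left.mp ih
      · exact Perm.sameCycle_apply_left.mpr ih
  · rintro ⟨n, rfl⟩
    induction n with
    | zero => exact .rfl
    | succ n ih =>
      rw [add_comm, zpow_add, zpow_one, Perm.mul_apply]
      exact ih.trans (step _)
    | pred n ih =>
      refine ih.trans (.symm ?_)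
      have hstep := step ((σ ^ (-(n : ℤ) - 1)) v)
      rwa [← Perm.mul_apply, ← zpow_one_add, add_sub_cancel] at hstep

theorem ncard_sameCycle (σ : Perm V) (v : V) :
    {w | σ.SameCycle v w}.ncard = minimalPeriod σ v := by
  have horbit : {w | σ.SameCycle v w} = MulAction.orbit (Subgroup.zpowers σ) v := by
    ext w
    simp [MulAction.mem_orbit_iff, Perm.SameCycle, Subgroup.exists_zpowers, Subgroup.smul_def]
  rw [horbit, ← Nat.card_coe_set_eq, Nat.card_congr (MulAction.orbitZPowersEquiv σ v),
    Nat.card_zmod]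
  rfl

theorem isCycleFactor_permGraph {σ : Perm V} {k : ℕ} (hk : 3 ≤ k)
    (hσ : ∀ v, minimalPeriod σ v = k) :
    IsCycleFactor (permGraph σ) k := by
  refine ⟨fun v => ?_, fun v => ?_⟩
  · have hne : ∀ j ∈ Set.Ico 1 3, σ^[j] v ≠ v := fun j hj =>
      not_isPeriodicPt_of_pos_of_lt_minimalPeriod (by grind) (by grind)
    have h1 : σ v ≠ v := hne 1 (by simp)
    have h2 : σ (σ v) ≠ v := hne 2 (by simp)
    have hneighbor : (permGraph σ).neighborSet v = {σ v, σ⁻¹ v} := by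
      ext w
      simp only [mem_neighborSet, permGraph_adj, Set.mem_insert_iff, Set.mem_singleton_iff,
        Perm.eq_inv_iff_eq]
      grind
    rw [hneighbor, Set.ncard_pair]
    rwa [Ne, Perm.eq_inv_iff_eq]
  · rw [← hσ v, ← ncard_sameCycle]
    congr 1
    ext w
    rw [ConnectedComponent.mem_supp_iff, ConnectedComponent.eq, permGraph_reachable_iff_sameCycle,
      Perm.sameCycle_comm, Set.mem_ofPred_eq]

end PermGraph

section Cayley

variable {Γ : Type*} [AddGroup Γ]

theorem isOneFactor_cayley_singleton_s13 {t : Γ} (ht : t ≠ 0) (h2 : t + t = 0) :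
    IsOneFactor (cayley Γ {t}) := by
  intro v
  have hneighbor : (cayley Γ {t}).neighborSet v = {t + v} := by
    ext w
    have hsymm : v = t + w ↔ w = t + v := by
      rw [← neg_add_eq_iff_eq_add, neg_eq_of_add_eq_zero_left h2, eq_comm]
    have hne : v ≠ t + v := fun h => ht (right_eq_add.mp h)
    simp only [cayley, mem_neighborSet, fromRel_adj, Set.mem_singleton_iff, sub_eq_iff_eq_add,
      hsymm, or_self, and_iff_right_iff_imp]
    exact fun h => h ▸ hne
  rw [hneighbor, Set.ncard_singleton]

theorem hasCycleFactorCover_cayley {S : Finset Γ} {A B : List (Perm Γ)} {m n α β : ℕ}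
    (hm : 3 ≤ m) (hn : 3 ≤ n) (hA : ∀ σ ∈ A, ∀ v, minimalPeriod σ v = m)
    (hB : ∀ σ ∈ B, ∀ v, minimalPeriod σ v = n) (hα : A.length = α) (hβ : B.length = β)
    (hcover : ∀ v, ∀ s ∈ S, ∃ σ ∈ A ++ B, σ v = s + v ∨ σ (s + v) = v) :
    HasCycleFactorCover (cayley Γ S) m n α β := by
  refine ⟨A.map permGraph, B.map permGraph, by simpa, by simpa, ?_, ?_, ?_⟩
  · exact List.forall_mem_map.mpr fun σ hσ => isCycleFactor_permGraph hm (hA σ hσ)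
  · exact List.forall_mem_map.mpr fun σ hσ => isCycleFactor_permGraph hn (hB σ hσ)
  have hcover_sub : ∀ v w, w ≠ v → w - v ∈ S →
      ∃ H ∈ A.map permGraph ++ B.map permGraph, H.Adj v w := by
    intro v w hne hs
    obtain ⟨σ, hσ, hvw⟩ := hcover v (w - v) hs
    rw [sub_add_cancel] at hvw
    exact ⟨permGraph σ, List.map_append ▸ List.mem_map_of_mem hσ, hne.symm, hvw⟩
  rintro v w ⟨hne, hs | hs⟩
  · obtain ⟨H, hH, hadj⟩ := hcover_sub w v hne hs
    exact ⟨H, hH, hadj.symm⟩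
  · exact hcover_sub v w hne.symm hs

theorem top_sdiff_cayley_le {R S T : Set Γ}
    (h : ∀ d, d ≠ 0 → d ∈ R ∨ (d ∈ S ∨ -d ∈ S) ∨ d ∈ T ∨ -d ∈ T) :
    (⊤ : SimpleGraph Γ) \ cayley Γ R ≤ cayley Γ S ⊔ cayley Γ T := by
  rintro v w ⟨hne, hnot⟩
  have hdiff := h (v - w) (sub_ne_zero.mpr hne)
  rw [neg_sub] at hdiff
  rcases hdiff with hR | hS | hT
  · exact absurd ⟨hne, .inl hR⟩ hnot
  · exact .inl ⟨hne, hS⟩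
  · exact .inr ⟨hne, hT⟩

/-- The translate by `t` of a permutation, whose graph is the translate by `t` of its graph. -/
def translatePerm (t : Γ) (σ : Perm Γ) : Perm Γ := MulAut.conj (Equiv.addRight t) σ

theorem minimalPeriod_translatePerm (t : Γ) (σ : Perm Γ) (v : Γ) :
    minimalPeriod (translatePerm t σ) v = minimalPeriod σ (v - t) := by
  have hsemiconj : Semiconj (· + t) σ (translatePerm t σ) := fun w => by simp [translatePerm]
  refine minimalPeriod_eq_minimalPeriod_iff.mpr fun n => ?_
  have hiterate := hsemiconj.iterate_right n (v - t)
  simp only [sub_add_cancel] at hiterate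
  rw [IsPeriodicPt, IsFixedPt, ← hiterate, ← eq_sub_iff_add_eq, IsPeriodicPt, IsFixedPt]

/-- A cycle factor, given as a permutation, together with the translates of it that are used in a
decomposition: those by `0, step, …, (copies - 1) • step`. -/
structure BaseFactor (Γ : Type*) where
  step : Γ
  copies : ℕ
  perm : Perm Γ

/-- The translates of a base factor that are used in a decomposition. -/
def BaseFactor.develop (b : BaseFactor Γ) : List (Perm Γ) :=
  (List.range b.copies).map fun j => translatePerm (j • b.step) b.perm

theorem BaseFactor.minimalPeriod_of_mem_develop {L : List (BaseFactor Γ)} {k : ℕ}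
    (hL : ∀ b ∈ L, ∀ v, minimalPeriod b.perm v = k) :
    ∀ σ ∈ L.flatMap BaseFactor.develop, ∀ v, minimalPeriod σ v = k := by
  intro σ hσ v
  obtain ⟨b, hb, hσ⟩ := List.mem_flatMap.mp hσ
  obtain ⟨j, -, rfl⟩ := List.mem_map.mp hσ
  rw [minimalPeriod_translatePerm, hL b hb]

end Cayley

section Data

/-- The connection set, up to sign, of the part of `K_30` that has a decomposition into `a` triangle
factors and `4 - a` pentagon factors for every `a ≤ 4`. -/
def flexibleSteps : Finset (Fin 30) := {1, 10, 11, 12}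

/-- The connection set, up to sign, of the part of `K_30` that is decomposed in blocks of five
translates of a triangle or pentagon factor. -/
def blockSteps : Finset (Fin 30) := {2, 3, 4, 5, 6, 7, 8, 9, 13, 14}

/-- The base factors, found by computer search, of the triangle factors in a decomposition of the
Cayley graph of `flexibleSteps` with `a` triangle factors. -/
def flexibleTriangles : Fin 5 → List (BaseFactor (Fin 30))
  | 0 => []
  | 1 => [
      ⟨0, 1,
        c[0, 18, 29] * c[1, 11, 21] * c[2, 12, 22] * c[3, 13, 23] * c[4, 14, 24] * c[5, 16, 17] *
        c[6, 7, 25] * c[8, 19, 20] * c[9, 10, 28] * c[15, 26, 27]⟩]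
  | 2 => [
      ⟨0, 1,
        c[0, 10, 29] * c[1, 2, 21] * c[3, 4, 15] * c[5, 16, 17] * c[6, 7, 18] * c[8, 19, 20] *
        c[9, 27, 28] * c[11, 22, 23] * c[12, 13, 24] * c[14, 25, 26]⟩,
      ⟨0, 1,
        c[0, 18, 19] * c[1, 11, 12] * c[2, 13, 14] * c[3, 21, 22] * c[4, 5, 23] * c[6, 24, 25] *
        c[7, 8, 26] * c[9, 10, 20] * c[15, 16, 27] * c[17, 28, 29]⟩]
  | 3 => [
      ⟨10, 3,
        c[0, 19, 29] * c[1, 11, 12] * c[2, 3, 22] * c[4, 14, 15] * c[5, 6, 25] * c[7, 17, 18] *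
        c[8, 9, 28] * c[10, 20, 21] * c[13, 23, 24] * c[16, 26, 27]⟩]
  | 4 => [
      ⟨15, 2,
        c[0, 11, 12] * c[1, 2, 20] * c[3, 14, 15] * c[4, 5, 23] * c[6, 16, 26] * c[7, 18, 19] *
        c[8, 9, 27] * c[10, 21, 22] * c[13, 24, 25] * c[17, 28, 29]⟩,
      ⟨15, 2,
        c[0, 10, 20] * c[1, 12, 13] * c[2, 3, 21] * c[4, 15, 16] * c[5, 6, 24] * c[7, 17, 27] *
        c[8, 18, 28] * c[9, 19, 29] * c[11, 22, 23] * c[14, 25, 26]⟩]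

/-- The base factors of the pentagon factors that complement those of `flexibleTriangles a`. -/
def flexiblePentagons : Fin 5 → List (BaseFactor (Fin 30))
  | 0 => [
      ⟨0, 1,
        c[0, 12, 13, 1, 19] * c[2, 3, 21, 9, 20] * c[4, 15, 27, 28, 16] * c[5, 17, 18, 6, 24] *
        c[7, 8, 26, 14, 25] * c[10, 22, 23, 11, 29]⟩,
      ⟨10, 3,
        c[0, 18, 8, 19, 20] * c[1, 2, 21, 10, 11] * c[3, 13, 25, 15, 14] * c[4, 22, 12, 23, 24] *
        c[5, 6, 7, 26, 16] * c[9, 27, 17, 28, 29]⟩]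
  | 1 => [
      ⟨10, 3,
        c[0, 10, 29, 11, 12] * c[1, 13, 2, 21, 20] * c[3, 14, 26, 25, 15] * c[4, 5, 24, 23, 22] *
        c[6, 16, 28, 18, 17] * c[7, 19, 9, 8, 27]⟩]
  | 2 => [
      ⟨0, 1,
        c[0, 1, 20, 21, 11] * c[2, 3, 13, 23, 12] * c[4, 16, 28, 10, 22] * c[5, 24, 14, 15, 25] *
        c[6, 17, 7, 27, 26] * c[8, 9, 19, 29, 18]⟩,
      ⟨0, 1,
        c[0, 12, 22, 2, 20] * c[1, 13, 25, 7, 19] * c[3, 14, 4, 24, 23] * c[5, 6, 16, 26, 15] *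
        c[8, 27, 17, 18, 28] * c[9, 21, 10, 11, 29]⟩]
  | 3 => [
      ⟨0, 1,
        c[0, 12, 24, 6, 18] * c[1, 13, 25, 7, 19] * c[2, 14, 26, 8, 20] * c[3, 15, 27, 9, 21] *
        c[4, 16, 28, 10, 22] * c[5, 17, 29, 11, 23]⟩]
  | 4 => []

/-- Two triangle factors, found by computer search, whose translates by multiples of `6` decompose
the Cayley graph of `blockSteps`. -/
def blockTriangles : List (BaseFactor (Fin 30)) := [
  ⟨6, 5,
    c[0, 23, 28] * c[1, 18, 25] * c[2, 6, 8] * c[3, 11, 24] * c[4, 10, 17] * c[5, 7, 9] *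
    c[12, 16, 20] * c[13, 26, 29] * c[14, 21, 27] * c[15, 19, 22]⟩,
  ⟨6, 5,
    c[0, 22, 25] * c[1, 9, 23] * c[2, 4, 18] * c[3, 6, 12] * c[5, 11, 14] * c[7, 16, 21] *
    c[8, 13, 17] * c[10, 19, 26] * c[15, 20, 28] * c[24, 27, 29]⟩]

/-- Two pentagon factors whose translates by multiples of `6` cover, one by one, the same edges as
those of the factors in `blockTriangles`. -/
def blockPentagons : List (BaseFactor (Fin 30)) := [
  ⟨6, 5,
    c[0, 9, 16, 22, 17] * c[1, 3, 29, 21, 27] * c[2, 5, 12, 8, 15] * c[4, 6, 19, 13, 11] *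
    c[7, 20, 14, 10, 23] * c[18, 25, 28, 24, 26]⟩,
  ⟨6, 5,
    c[0, 6, 1, 9, 22] * c[2, 4, 7, 16, 25] * c[3, 12, 28, 20, 17] * c[5, 11, 19, 23, 14] *
    c[8, 13, 27, 29, 24] * c[10, 15, 18, 21, 26]⟩]

theorem hasCycleFactorCover_flexibleSteps (a : Fin 5) :
    HasCycleFactorCover (cayley (Fin 30) flexibleSteps) 3 5 a (4 - a) := by
  have : Fact (Nat.Prime 5) := ⟨Nat.prime_five⟩
  have htriangle : ∀ i, ∀ B ∈ flexibleTriangles i, ∀ v, minimalPeriod B.perm v = 3 := by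
    simp only [minimalPeriod_eq_prime_iff, IsPeriodicPt, IsFixedPt]
    decide +kernel
  have hpentagon : ∀ i, ∀ B ∈ flexiblePentagons i, ∀ v, minimalPeriod B.perm v = 5 := by
    simp only [minimalPeriod_eq_prime_iff, IsPeriodicPt, IsFixedPt]
    decide +kernel
  have hcover : ∀ i v, ∀ s ∈ flexibleSteps,
      ∃ σ ∈ (flexibleTriangles i).flatMap BaseFactor.develop ++
        (flexiblePentagons i).flatMap BaseFactor.develop, σ v = s + v ∨ σ (s + v) = v := by
    decide +kernel
  exact hasCycleFactorCover_cayley le_rfl (by decide)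
    (BaseFactor.minimalPeriod_of_mem_develop (htriangle a))
    (BaseFactor.minimalPeriod_of_mem_develop (hpentagon a))
    (by decide +revert +kernel) (by decide +revert +kernel) (hcover a)

theorem hasCycleFactorCover_blockSteps (b : Fin 3) :
    HasCycleFactorCover (cayley (Fin 30) blockSteps) 3 5 (5 * b) (10 - 5 * b) := by
  have : Fact (Nat.Prime 5) := ⟨Nat.prime_five⟩
  have htriangle : ∀ B ∈ blockTriangles, ∀ v, minimalPeriod B.perm v = 3 := by
    simp only [minimalPeriod_eq_prime_iff, IsPeriodicPt, IsFixedPt]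
    decide +kernel
  have hpentagon : ∀ B ∈ blockPentagons, ∀ v, minimalPeriod B.perm v = 5 := by
    simp only [minimalPeriod_eq_prime_iff, IsPeriodicPt, IsFixedPt]
    decide +kernel
  have hcover : ∀ (j : Fin 3) v, ∀ s ∈ blockSteps,
      ∃ σ ∈ (blockTriangles.take j).flatMap BaseFactor.develop ++
        (blockPentagons.drop j).flatMap BaseFactor.develop, σ v = s + v ∨ σ (s + v) = v := by
    decide +kernel
  exact hasCycleFactorCover_cayley le_rfl (by decide)
    (BaseFactor.minimalPeriod_of_mem_develop fun B hB => htriangle B (List.mem_of_mem_take hB))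
    (BaseFactor.minimalPeriod_of_mem_develop fun B hB => hpentagon B (List.mem_of_mem_drop hB))
    (by decide +revert +kernel) (by decide +revert +kernel) (hcover b)

end Data

theorem stmt_13 (α β : ℕ) : HW 30 3 5 α β ↔ α + β = 14 := by
  refine ⟨fun h => ?_, fun h => ?_⟩
  · have hdegree := h.two_mul_add_two (by decide)
    omega
  · obtain ⟨a, b, rfl, rfl⟩ :
        ∃ (a : Fin 5) (b : Fin 3), α = a + 5 * b ∧ β = (4 - a) + (10 - 5 * b) :=
      ⟨⟨α % 5, by omega⟩, ⟨α / 5, by omega⟩, by grind, by grind⟩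
    have hmatching : IsOneFactor (cayley (Fin 30) {15}) :=
      isOneFactor_cayley_singleton_s13 (by decide) (by decide)
    have hsplit : ⊤ \ cayley (Fin 30) {15} ≤
        cayley (Fin 30) flexibleSteps ⊔ cayley (Fin 30) blockSteps :=
      top_sdiff_cayley_le (by simp only [Set.mem_singleton_iff, Finset.mem_coe]; decide)
    have hcover := (hasCycleFactorCover_flexibleSteps a).sup (hasCycleFactorCover_blockSteps b)
    exact (hcover.mono hsplit).hw hmatching (by decide) (by omega)
end
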